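/- arXiv:2012.08999 — 2 statements merged into one kernel-verified Lean document; each statement's English description precedes it below -/
import Mathlib

section
/- An abelian group endowed with a norm such that the induced metric topology is discrete is a free abelian group. -/
/-!
A module with a well-ordered filtration whose successive quotients are free is itself free, so it
suffices to filter `A`. Call a submodule `B` good if the induced norm on `A ⧸ B`, the distance to
the rational span of `B`, is again discrete.

If `A` is countable, enumerate it and add one element at a time, passing to the pure closure: by
Dirichlet approximation the pure closure of one element is good, and it is cyclic, generated by any
nonzero element whose norm is less than twice the minimum.

If `A` is uncountable, choose for each `n` and `b` an approximate quotient of `b` by `n`. By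
discreteness a submodule closed under these countably many choice functions is good, and unions of
chains of closed submodules are closed. Hence `A` is filtered by closed submodules of smaller
cardinality, and the successive quotients are free by induction on the cardinality.
-/

open Cardinal Module

section Filtration

variable {R M : Type*} [Ring R] [AddCommGroup M] [Module R M]

lemma exists_disjoint_sup_eq_linearEquiv_map_mkQ {N P : Submodule R M} (hNP : N ≤ P)
    [Projective R (P.map N.mkQ)] :
    ∃ C : Submodule R M, Disjoint N C ∧ N ⊔ C = P ∧ Nonempty (P.map N.mkQ ≃ₗ[R] C) := by
  obtain ⟨s, hs⟩ := projective_lifting_property N.mkQ (P.map N.mkQ).subtype N.mkQ_surjective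
  have mkQ_s (d : P.map N.mkQ) : N.mkQ (s d) = d := LinearMap.congr_fun hs d
  have s_injective : Function.Injective s := fun d d' h ↦
    Subtype.ext (by rw [← mkQ_s, ← mkQ_s, h])
  have mem_P_of_mkQ_mem {x : M} (hx : N.mkQ x ∈ P.map N.mkQ) : x ∈ P := by
    rwa [← Submodule.mem_comap, Submodule.comap_map_mkQ, sup_eq_right.mpr hNP] at hx
  refine ⟨s.range, ?_, le_antisymm (sup_le hNP ?_) fun x hx ↦ ?_,
    ⟨LinearEquiv.ofInjective s s_injective⟩⟩
  · rw [Submodule.disjoint_def]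
    rintro _ hd ⟨d, rfl⟩
    have d_eq_zero : d = 0 := Subtype.ext <|
      (mkQ_s d).symm.trans ((Submodule.Quotient.mk_eq_zero N).mpr hd)
    rw [d_eq_zero, map_zero]
  · rintro _ ⟨d, rfl⟩
    exact mem_P_of_mkQ_mem (mkQ_s d ▸ d.2)
  · let d : P.map N.mkQ := ⟨N.mkQ x, Submodule.mem_map_of_mem hx⟩
    have sub_mem_N : x - s d ∈ N := by
      rw [← Submodule.Quotient.mk_eq_zero, ← N.mkQ_apply, map_sub, mkQ_s, sub_self]
    exact sub_add_cancel x (s d) ▸ Submodule.add_mem_sup sub_mem_N ⟨d, rfl⟩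

lemma iSupIndep_of_disjoint_iSup_Iio {ι α : Type*} [LinearOrder ι] [CompleteLattice α]
    [IsModularLattice α] [IsCompactlyGenerated α] {C : ι → α}
    (hC : ∀ i, Disjoint (⨆ j : Set.Iio i, C j) (C i)) : iSupIndep C := by
  classical
  refine iSupIndep_iff_supIndep.mpr fun s ↦ ?_
  induction s using Finset.induction_on_max with
  | empty => exact Finset.supIndep_empty C
  | insert i s lt_i ih =>
    have sup_le_iSup : s.sup C ≤ ⨆ j : Set.Iio i, C j :=
      Finset.sup_le fun j hj ↦ le_iSup (fun j : Set.Iio i ↦ C j) ⟨j, lt_i j hj⟩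
    exact ih.insert ((hC i).symm.mono_right sup_le_iSup)

lemma free_of_wellOrdered_filtration {ι : Type*} [LinearOrder ι] [WellFoundedLT ι]
    {F : ι → Submodule R M} (hmono : Monotone F) (htop : ∀ x, ∃ i, x ∈ F i)
    (hfree : ∀ i, Free R ((F i).map (⨆ j : Set.Iio i, F j).mkQ)) : Free R M := by
  classical
  choose C disjoint_C sup_C equiv_C using fun i ↦
    exists_disjoint_sup_eq_linearEquiv_map_mkQ (iSup_le fun j : Set.Iio i ↦ hmono j.2.le)
  have C_le (i : ι) : C i ≤ F i := sup_C i ▸ le_sup_right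
  have indep : iSupIndep C := iSupIndep_of_disjoint_iSup_Iio fun i ↦
    (disjoint_C i).mono_left (iSup_mono fun j ↦ C_le j)
  have F_le (i : ι) : F i ≤ iSup C := by
    induction i using WellFoundedLT.induction with
    | ind i ih => exact sup_C i ▸ sup_le (iSup_le fun j ↦ ih j j.2) (le_iSup C i)
  have iSup_C : iSup C = ⊤ := eq_top_iff.mpr fun x _ ↦ (htop x).elim fun i hi ↦ F_le i hi
  have internal := DirectSum.isInternal_submodule_of_iSupIndep_of_iSup_eq_top indep iSup_C
  have free_C (i : ι) : Free R (C i) := Free.of_equiv (equiv_C i).some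
  exact Free.of_equiv (LinearEquiv.ofBijective (DirectSum.coeLinearMap C) internal)

lemma free_of_nat_filtration {F : ℕ → Submodule R M} (hmono : Monotone F) (hbot : F 0 = ⊥)
    (htop : ∀ x, ∃ n, x ∈ F n) (hfree : ∀ n, Free R ((F (n + 1)).map (F n).mkQ)) :
    Free R M := by
  have iSup_Iio (n : ℕ) : ⨆ j : Set.Iio n, F (j + 1) = F n := by
    refine le_antisymm (iSup_le fun j ↦ hmono j.2) ?_
    cases n with
    | zero => exact hbot ▸ bot_le
    | succ n => exact le_iSup (fun j : Set.Iio (n + 1) ↦ F (j + 1)) ⟨n, n.lt_succ_self⟩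
  refine free_of_wellOrdered_filtration (F := fun n ↦ F (n + 1))
    (fun _ _ h ↦ hmono (Nat.succ_le_succ h)) (fun x ↦ ?_) fun n ↦ ?_
  · obtain ⟨n, hn⟩ := htop x
    exact ⟨n, hmono n.le_succ hn⟩
  · rw [iSup_Iio]
    exact hfree n

end Filtration

section ClosedSubmodules

variable {R M ι : Type*} [Semiring R] [AddCommMonoid M] [Module R M]

lemma mapsTo_iSup_of_directed {κ : Type*} {F : κ → Submodule R M} (hF : Directed (· ≤ ·) F)
    {f : M → M} (hf0 : f 0 = 0) (hf : ∀ k, Set.MapsTo f (F k) (F k)) :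
    Set.MapsTo f (⨆ k, F k : Submodule R M) (⨆ k, F k : Submodule R M) := by
  intro x hx
  cases isEmpty_or_nonempty κ with
  | inl _ =>
    rw [iSup_of_empty] at hx ⊢
    rw [(Submodule.mem_bot R).mp hx, hf0]
    exact zero_mem _
  | inr _ =>
    obtain ⟨k, hk⟩ := (Submodule.mem_iSup_of_directed F hF).mp hx
    exact le_iSup F k (hf k hk)

lemma mk_union_iUnion_image_le {α : Type*} [Countable ι] (f : ι → α → α) {S : Set α}
    {κ : Cardinal} (hκ : ℵ₀ ≤ κ) (hS : #S ≤ κ) : #(S ∪ ⋃ i, f i '' S : Set α) ≤ κ := by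
  refine (mk_union_le _ _).trans (add_le_of_le hκ hS ?_)
  rw [← lift_le]
  refine (mk_iUnion_le_lift _).trans (mul_le_of_le (aleph0_le_lift.mpr hκ) ?_ ?_)
  · exact (lift_le_aleph0.mpr mk_le_aleph0).trans (aleph0_le_lift.mpr hκ)
  · exact ciSup_le' fun i ↦ lift_le.mpr (mk_image_le.trans hS)

lemma mk_span_le_max [Countable R] (X : Set M) : #(Submodule.span R X) ≤ max #X ℵ₀ := by
  have mk_finsupp_le : #(X →₀ R) ≤ max (lift #X) ℵ₀ := by
    rcases finite_or_infinite X with _ | _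
    · exact le_max_of_le_right mk_le_aleph0
    rcases subsingleton_or_nontrivial R with _ | _
    · exact le_max_of_le_right mk_le_aleph0
    rw [mk_finsupp_lift_of_infinite]
    exact max_le_max le_rfl (lift_le_aleph0.mpr mk_le_aleph0)
  rw [← lift_le, lift_max, lift_aleph0, Finsupp.span_eq_range_linearCombination]
  exact mk_range_le_lift.trans ((lift_le.mpr mk_finsupp_le).trans_eq (by simp))

variable (R) in
/-- The smallest submodule that contains `X` and is closed under every operation `f i`. It plays the
role of a Skolem hull in the choice of submodules with discrete quotient. -/
def closedHull (f : ι → M → M) (X : Set M) : Submodule R M :=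
  sInf {B | X ⊆ B ∧ ∀ i, Set.MapsTo (f i) B B}

lemma subset_closedHull (f : ι → M → M) (X : Set M) : X ⊆ closedHull R f X :=
  fun _ hx ↦ Submodule.mem_sInf.mpr fun _ hB ↦ hB.1 hx

lemma mapsTo_closedHull (f : ι → M → M) (X : Set M) (i : ι) :
    Set.MapsTo (f i) (closedHull R f X) (closedHull R f X) :=
  fun _ hx ↦ Submodule.mem_sInf.mpr fun B hB ↦ hB.2 i (Submodule.mem_sInf.mp hx B hB)

lemma closedHull_mono (f : ι → M → M) : Monotone (closedHull R f) :=
  fun _ _ hXY ↦ sInf_le_sInf fun _ hB ↦ ⟨hXY.trans hB.1, hB.2⟩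

lemma mk_closedHull_le [Countable R] [Countable ι] (f : ι → M → M) (X : Set M) :
    #(closedHull R f X) ≤ max #X ℵ₀ := by
  let enlarge (B : Submodule R M) : Submodule R M := .span R (B ∪ ⋃ i, f i '' B)
  let G (n : ℕ) : Submodule R M := enlarge^[n] (.span R X)
  have le_enlarge (B : Submodule R M) : (B ∪ ⋃ i, f i '' B : Set M) ⊆ enlarge B :=
    Submodule.subset_span
  have G_succ (n : ℕ) : G (n + 1) = enlarge (G n) := Function.iterate_succ_apply' ..
  have G_mono : Monotone G := monotone_nat_of_le_succ fun n ↦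
    G_succ n ▸ Set.subset_union_left.trans (le_enlarge (G n))
  have mapsTo_G (n : ℕ) (i : ι) : Set.MapsTo (f i) (G n) (G (n + 1)) := fun x hx ↦
    G_succ n ▸ le_enlarge (G n) (.inr (Set.mem_iUnion.mpr ⟨i, x, hx, rfl⟩))
  have mk_G_le (n : ℕ) : #(G n) ≤ max #X ℵ₀ := by
    induction n with
    | zero => exact mk_span_le_max X
    | succ n ih =>
      rw [G_succ]
      exact (mk_span_le_max _).trans
        (max_le (mk_union_iUnion_image_le f (le_max_right _ _) ih) (le_max_right _ _))
  have mem_iSup_G {x : M} : x ∈ ⨆ n, G n ↔ ∃ n, x ∈ G n :=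
    Submodule.mem_iSup_of_directed G G_mono.directed_le
  have hull_le : closedHull R f X ≤ ⨆ n, G n := sInf_le
    ⟨Submodule.subset_span.trans (le_iSup G 0), fun i x hx ↦ by
      obtain ⟨n, hn⟩ := mem_iSup_G.mp hx
      exact mem_iSup_G.mpr ⟨n + 1, mapsTo_G n i hn⟩⟩
  refine mk_subtype_le_of_countable_eventually_mem (f := fun n ↦ (G n : Set M))
    (l := Filter.atTop) (fun x hx ↦ ?_) mk_G_le
  obtain ⟨n, hn⟩ := mem_iSup_G.mp (hull_le hx)
  exact Filter.eventually_atTop.mpr ⟨n, fun m hm ↦ G_mono hm hn⟩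

lemma exists_filtration_mapsTo [Countable R] [Countable ι] [Uncountable M] (f : ι → M → M) :
    ∃ F : (#M).ord.ToType → Submodule R M, Monotone F ∧ (∀ x, ∃ i, x ∈ F i) ∧
      (∀ i, #(F i) < #M) ∧ ∀ i k, Set.MapsTo (f k) (F i) (F i) := by
  obtain ⟨e⟩ := Cardinal.eq.mp (mk_ord_toType #M)
  have aleph0_lt : ℵ₀ < #M := aleph0_lt_mk
  have mk_Iic (i : (#M).ord.ToType) : #(Set.Iic i) < #M :=
    (mk_Iic_lt i (by simp) (by simp)).trans_eq (mk_ord_toType #M)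
  refine ⟨fun i ↦ closedHull R f (e '' Set.Iic i), fun i j hij ↦ ?_, fun x ↦ ?_, fun i ↦ ?_,
    fun i ↦ mapsTo_closedHull f _⟩
  · exact closedHull_mono f (Set.image_mono (Set.Iic_subset_Iic.mpr hij))
  · exact ⟨e.symm x, subset_closedHull f _ ⟨e.symm x, Set.self_mem_Iic, e.apply_symm_apply x⟩⟩
  · exact (mk_closedHull_le f _).trans_lt (max_lt (mk_image_le.trans_lt (mk_Iic i)) aleph0_lt)

end ClosedSubmodules

section PureClosure

variable {R M : Type*} [CommRing R] [AddCommGroup M] [Module R M]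

/-- The pure closure of `N`: the elements that a non-zero-divisor multiplies into `N`, encoded as
the preimage of the torsion of the quotient. Quotients by pure closures are torsion-free. -/
def pureClosure (N : Submodule R M) : Submodule R M :=
  (Submodule.torsion R (M ⧸ N)).comap N.mkQ

lemma le_pureClosure (N : Submodule R M) : N ≤ pureClosure N :=
  N.le_comap_mkQ _

variable [IsDomain R]

lemma mem_pureClosure {N : Submodule R M} {x : M} :
    x ∈ pureClosure N ↔ ∃ n : R, n ≠ 0 ∧ n • x ∈ N := by
  simp only [pureClosure, Submodule.mem_comap, Submodule.mem_torsion_iff, Subtype.exists,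
    mem_nonZeroDivisors_iff_ne_zero, Submonoid.mk_smul, exists_prop, Submodule.mkQ_apply,
    ← Submodule.Quotient.mk_smul, Submodule.Quotient.mk_eq_zero]

lemma mem_pureClosure_span_singleton {a x : M} :
    x ∈ pureClosure (Submodule.span R {a}) ↔ ∃ n m : R, n ≠ 0 ∧ n • x = m • a := by
  simp only [mem_pureClosure, Submodule.mem_span_singleton, exists_and_left, eq_comm]

lemma exists_smul_eq_smul_of_mem_pureClosure_span_singleton [IsTorsionFree R M] {a b x : M}
    (hx : x ∈ pureClosure (Submodule.span R {a})) (hb : b ∈ pureClosure (Submodule.span R {a}))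
    (hb0 : b ≠ 0) : ∃ n m : R, n ≠ 0 ∧ n • x = m • b := by
  obtain ⟨n, m, hn, hx⟩ := mem_pureClosure_span_singleton.mp hx
  obtain ⟨n', m', hn', hb⟩ := mem_pureClosure_span_singleton.mp hb
  have hm' : m' ≠ 0 := by
    rintro rfl
    rw [zero_smul, smul_eq_zero_iff_right hn'] at hb
    exact hb0 hb
  exact ⟨m' * n, m * n', mul_ne_zero hm' hn, by rw [mul_smul, hx, mul_smul, hb, smul_comm]⟩

end PureClosure

section Seminorm

variable {A : Type*} [AddCommGroup A]

section

variable (p : Seminorm ℤ A)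

lemma seminorm_zsmul_sub_zsmul_le {n : ℤ} (hn : n ≠ 0) (m k j : ℤ) (x a : A) :
    p (k • x - j • a) ≤ ‖k‖ * p (n • x - m • a) / ‖n‖ + |k * (m / n : ℝ) - j| * p a := by
  have norm_pos : 0 < ‖n‖ := norm_pos_iff.mpr hn
  have coeff_norm : ‖k * m - n * j‖ = ‖n‖ * |k * (m / n : ℝ) - j| := by
    simp only [Int.norm_eq_abs, ← abs_mul]
    push_cast
    congr 1
    field_simp
  have smul_eq : n • (k • x - j • a) = k • (n • x - m • a) + (k * m - n * j) • a := by module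
  refine le_of_mul_le_mul_left ?_ norm_pos
  calc ‖n‖ * p (k • x - j • a)
    _ = p (k • (n • x - m • a) + (k * m - n * j) • a) := by rw [← smul_eq, map_smul_eq_mul]
    _ ≤ ‖k‖ * p (n • x - m • a) + ‖n‖ * |k * (m / n : ℝ) - j| * p a := by
      rw [← coeff_norm, ← map_smul_eq_mul, ← map_smul_eq_mul]
      exact map_add_le_add p _ _
    _ = ‖n‖ * (‖k‖ * p (n • x - m • a) / ‖n‖ + |k * (m / n : ℝ) - j| * p a) := by
      field_simp

lemma exists_seminorm_sub_zsmul_le_half {n m : ℤ} (hn : n ≠ 0) {x b : A} (h : n • x = m • b) :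
    ∃ k : ℤ, p (x - k • b) ≤ p b / 2 := by
  refine ⟨round (m / n : ℝ), ?_⟩
  have approx := seminorm_zsmul_sub_zsmul_le p hn m 1 (round (m / n : ℝ)) x b
  simp only [h, sub_self, map_zero, one_smul, mul_zero, zero_div, zero_add, Int.cast_one,
    one_mul] at approx
  calc p (x - round (m / n : ℝ) • b)
    _ ≤ 1 / 2 * p b := approx.trans (by gcongr; exact abs_sub_round _)
    _ = p b / 2 := by ring

/-- The infimum of `p y / ‖n‖` over the `y` representing a nonzero multiple `n • x`: the distance
of `x` from the rational span of `B`, were `A` embedded in `ℚ ⊗ A`. -/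
noncomputable def quotientDist (B : Submodule ℤ A) (x : A ⧸ B) : ℝ :=
  ⨅ r : {r : ℤ × A // r.1 ≠ 0 ∧ B.mkQ r.2 = r.1 • x}, p r.1.2 / ‖r.1.1‖

variable {p} {B : Submodule ℤ A} {x : A ⧸ B}

lemma norm_mul_quotientDist_le {n : ℤ} {y : A} (h : B.mkQ y = n • x) :
    ‖n‖ * quotientDist p B x ≤ p y := by
  rcases eq_or_ne n 0 with rfl | hn
  · simp
  rw [← le_div_iff₀' (norm_pos_iff.mpr hn)]
  exact ciInf_le (f := fun r : {r : ℤ × A // r.1 ≠ 0 ∧ B.mkQ r.2 = r.1 • x} ↦ p r.1.2 / ‖r.1.1‖)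
    ⟨0, by rintro _ ⟨r, rfl⟩; positivity⟩ ⟨(n, y), hn, h⟩

lemma le_quotientDist {c : ℝ} (h : ∀ n : ℤ, n ≠ 0 → ∀ y, B.mkQ y = n • x → ‖n‖ * c ≤ p y) :
    c ≤ quotientDist p B x := by
  obtain ⟨y, hy⟩ := B.mkQ_surjective x
  have : Nonempty {r : ℤ × A // r.1 ≠ 0 ∧ B.mkQ r.2 = r.1 • x} :=
    ⟨(1, y), one_ne_zero, by rw [hy, one_smul]⟩
  exact le_ciInf fun ⟨(n, y), hn, hy⟩ ↦ (le_div_iff₀' (norm_pos_iff.mpr hn)).mpr (h n hn y hy)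

lemma quotientDist_smul (k : ℤ) (x : A ⧸ B) :
    quotientDist p B (k • x) = ‖k‖ * quotientDist p B x := by
  refine le_antisymm ?_ (le_quotientDist fun n _ y hy ↦ ?_)
  · rcases eq_or_ne k 0 with rfl | hk
    · simpa using norm_mul_quotientDist_le (p := p) (B := B) (x := 0) (n := 1) (y := 0) (by simp)
    have norm_pos : 0 < ‖k‖ := norm_pos_iff.mpr hk
    rw [← div_le_iff₀' norm_pos]
    refine le_quotientDist fun n _ y hy ↦ ?_
    rw [← mul_div_assoc, div_le_iff₀' norm_pos, ← map_smul_eq_mul]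
    exact norm_mul_quotientDist_le (by rw [map_smul, hy, smul_comm])
  · rw [← mul_assoc, ← norm_mul]
    exact norm_mul_quotientDist_le (by rw [hy, mul_smul])

lemma quotientDist_add_le (x x' : A ⧸ B) :
    quotientDist p B (x + x') ≤ quotientDist p B x + quotientDist p B x' := by
  rw [← sub_le_iff_le_add]
  refine le_quotientDist fun n hn y hy ↦ ?_
  rw [mul_sub, sub_le_comm, ← div_le_iff₀' (norm_pos_iff.mpr hn)]
  refine le_quotientDist fun m _ y' hy' ↦ ?_
  rw [← mul_div_assoc, div_le_iff₀' (norm_pos_iff.mpr hn), mul_sub, sub_le_iff_le_add',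
    ← mul_assoc, ← norm_mul]
  calc ‖m * n‖ * quotientDist p B (x + x')
    _ ≤ p (m • y + n • y') :=
      norm_mul_quotientDist_le (by simp only [map_add, map_smul, hy, hy']; module)
    _ ≤ ‖m‖ * p y + ‖n‖ * p y' := by
      simpa only [map_smul_eq_mul] using map_add_le_add p (m • y) (n • y')

lemma exists_lt_of_quotientDist_lt {c : ℝ} (h : quotientDist p B x < c) :
    ∃ n : ℤ, n ≠ 0 ∧ ∃ y, B.mkQ y = n • x ∧ p y < ‖n‖ * c := by
  contrapose! h
  exact le_quotientDist h

variable (p B) in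
/-- The seminorm on `A ⧸ B` induced by `p`, given by `quotientDist`. The quotient norm
`x ↦ inf {p y | y ∈ x}` is not homogeneous under integers in general, whence the division by `n`. -/
noncomputable def quotientSeminorm : Seminorm ℤ (A ⧸ B) :=
  Seminorm.of (quotientDist p B) quotientDist_add_le quotientDist_smul

lemma quotientSeminorm_mkQ_le (a : A) : quotientSeminorm p B (B.mkQ a) ≤ p a := by
  rw [← one_mul (quotientSeminorm p B _), ← norm_one (α := ℤ)]
  exact norm_mul_quotientDist_le (one_smul ℤ _).symm

end

/-- The seminorm `p` is a norm inducing the discrete topology, expressed by a positive lower bound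
on its values at nonzero elements. -/
def IsDiscreteNorm (p : Seminorm ℤ A) : Prop :=
  ∃ ε > 0, ∀ a, p a < ε → a = 0

/-- The norm induced by `p` on `A ⧸ B` is discrete. Such submodules are the building blocks of the
filtrations, since the argument can be repeated in the quotient. -/
def HasDiscreteQuotient (p : Seminorm ℤ A) (B : Submodule ℤ A) : Prop :=
  IsDiscreteNorm (quotientSeminorm p B)

variable {p : Seminorm ℤ A} {B : Submodule ℤ A}

lemma hasDiscreteQuotient_iff : HasDiscreteQuotient p B ↔
    ∃ ε > 0, ∀ n : ℤ, n ≠ 0 → ∀ a, ∀ b ∈ B, p (n • a - b) < ‖n‖ * ε → a ∈ B := by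
  constructor <;> rintro ⟨ε, hε, h⟩ <;> refine ⟨ε, hε, ?_⟩
  · intro n _ a b hb hlt
    have mkQ_eq : B.mkQ (n • a - b) = n • B.mkQ a := by
      simpa using hb
    have dist_lt : quotientSeminorm p B (B.mkQ a) < ε :=
      lt_of_mul_lt_mul_left ((norm_mul_quotientDist_le mkQ_eq).trans_lt hlt) (norm_nonneg n)
    simpa using h _ dist_lt
  · intro x hx
    obtain ⟨a, rfl⟩ := B.mkQ_surjective x
    obtain ⟨n, hn, y, hy, hlt⟩ := exists_lt_of_quotientDist_lt hx
    have sub_mem : n • a - y ∈ B := by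
      rw [← Submodule.Quotient.mk_eq_zero, ← B.mkQ_apply, map_sub, map_smul, hy, sub_self]
    simpa using h n hn a _ sub_mem (by rwa [sub_sub_cancel])

lemma HasDiscreteQuotient.comap_mkQ {C : Submodule ℤ (A ⧸ B)}
    (hC : HasDiscreteQuotient (quotientSeminorm p B) C) :
    HasDiscreteQuotient p (C.comap B.mkQ) := by
  obtain ⟨ε, hε, h⟩ := hasDiscreteQuotient_iff.mp hC
  refine hasDiscreteQuotient_iff.mpr ⟨ε, hε, fun n hn a b hb hlt ↦ h n hn _ _ hb ?_⟩
  rw [← map_smul, ← map_sub]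
  exact (quotientSeminorm_mkQ_le _).trans_lt hlt

namespace IsDiscreteNorm

lemma comp_subtype (hp : IsDiscreteNorm p) (B : Submodule ℤ A) :
    IsDiscreteNorm (p.comp B.subtype) := by
  obtain ⟨ε, hε, h⟩ := hp
  exact ⟨ε, hε, fun b hb ↦ Subtype.ext (h b hb)⟩

lemma isTorsionFree (hp : IsDiscreteNorm p) : IsTorsionFree ℤ A := by
  obtain ⟨ε, hε, h⟩ := hp
  refine .of_smul_eq_zero fun n a hna ↦ or_iff_not_imp_left.mpr fun hn ↦ h a ?_
  have norm_mul_eq : ‖n‖ * p a = 0 := by rw [← map_smul_eq_mul, hna, map_zero]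
  rwa [(mul_eq_zero_iff_left (norm_ne_zero_iff.mpr hn)).mp norm_mul_eq]

lemma hasDiscreteQuotient_bot (hp : IsDiscreteNorm p) : HasDiscreteQuotient p ⊥ := by
  obtain ⟨ε, hε, h⟩ := hp
  refine hasDiscreteQuotient_iff.mpr ⟨ε, hε, fun n _ a b hb hlt ↦ h a ?_⟩
  rw [(Submodule.mem_bot ℤ).mp hb, sub_zero, map_smul_eq_mul] at hlt
  exact lt_of_mul_lt_mul_left hlt (norm_nonneg n)

lemma exists_forall_mem_pureClosure (hp : IsDiscreteNorm p) (a : A) :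
    ∃ δ > 0, ∀ n : ℤ, n ≠ 0 → ∀ (m : ℤ) (x : A), p (n • x - m • a) < ‖n‖ * δ →
      x ∈ pureClosure (Submodule.span ℤ {a}) := by
  obtain ⟨ε, hε, h⟩ := hp
  obtain ⟨N, hN⟩ := exists_nat_gt (2 * p a / ε)
  have N_pos : (0 : ℝ) < N := lt_of_le_of_lt (by positivity) hN
  refine ⟨ε / (2 * N), by positivity, fun n hn m x hlt ↦ ?_⟩
  obtain ⟨j, k, k_pos, k_le, approx⟩ :=
    Real.exists_int_int_abs_mul_sub_le (m / n : ℝ) (Nat.cast_pos.mp N_pos)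
  have norm_k_le : ‖k‖ ≤ N := by
    rw [Int.norm_eq_abs, abs_of_pos (by exact_mod_cast k_pos)]
    exact_mod_cast k_le
  have first_term : ‖k‖ * p (n • x - m • a) / ‖n‖ < ε / 2 := by
    rw [div_lt_iff₀ (norm_pos_iff.mpr hn)]
    calc ‖k‖ * p (n • x - m • a)
      _ ≤ N * p (n • x - m • a) := by gcongr
      _ < N * (‖n‖ * (ε / (2 * N))) := by gcongr
      _ = ε / 2 * ‖n‖ := by field_simp
  have second_term : |k * (m / n : ℝ) - j| * p a ≤ ε / 2 := by
    calc |k * (m / n : ℝ) - j| * p a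
      _ ≤ 1 / (N + 1) * p a := by gcongr
      _ ≤ 1 / N * p a := by gcongr; linarith
      _ ≤ ε / 2 := by
        rw [div_lt_iff₀ hε] at hN
        field_simp
        linarith
  have small : p (k • x - j • a) < ε :=
    (seminorm_zsmul_sub_zsmul_le p hn m k j x a).trans_lt (by linarith)
  exact mem_pureClosure_span_singleton.mpr ⟨k, j, k_pos.ne', sub_eq_zero.mp (h _ small)⟩

lemma hasDiscreteQuotient_pureClosure_span_singleton (hp : IsDiscreteNorm p) (a : A) :
    HasDiscreteQuotient p (pureClosure (Submodule.span ℤ {a})) := by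
  obtain ⟨δ, hδ, h⟩ := hp.exists_forall_mem_pureClosure a
  refine hasDiscreteQuotient_iff.mpr ⟨δ, hδ, fun n hn x b hb hlt ↦ ?_⟩
  obtain ⟨l, m, hl, hlb⟩ := mem_pureClosure_span_singleton.mp hb
  refine h (l * n) (mul_ne_zero hl hn) m x ?_
  rw [← hlb, mul_smul, ← smul_sub, map_smul_eq_mul, norm_mul, mul_assoc]
  exact mul_lt_mul_of_pos_left hlt (norm_pos_iff.mpr hl)

lemma exists_forall_lt_two_mul (hp : IsDiscreteNorm p) (hB : B ≠ ⊥) :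
    ∃ b ∈ B, b ≠ 0 ∧ ∀ c ∈ B, c ≠ 0 → p b < 2 * p c := by
  obtain ⟨ε, hε, h⟩ := hp
  let S : Set ℝ := p '' {c | c ∈ B ∧ c ≠ 0}
  obtain ⟨b₀, hb₀⟩ := B.exists_mem_ne_zero_of_ne_bot hB
  have S_nonempty : S.Nonempty := ⟨p b₀, b₀, hb₀, rfl⟩
  have ε_le : ∀ r ∈ S, ε ≤ r := by
    rintro _ ⟨c, hc, rfl⟩
    exact not_lt.mp fun hlt ↦ hc.2 (h c hlt)
  have sInf_pos : 0 < sInf S := hε.trans_le (le_csInf S_nonempty ε_le)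
  obtain ⟨_, ⟨b, ⟨hbB, hb0⟩, rfl⟩, hb⟩ :=
    exists_lt_of_csInf_lt S_nonempty (lt_two_mul_self sInf_pos)
  refine ⟨b, hbB, hb0, fun c hcB hc0 ↦ hb.trans_le ?_⟩
  gcongr
  exact csInf_le ⟨ε, ε_le⟩ ⟨c, ⟨hcB, hc0⟩, rfl⟩

lemma exists_pureClosure_span_singleton_eq (hp : IsDiscreteNorm p) (a : A) :
    ∃ b, pureClosure (Submodule.span ℤ {a}) = Submodule.span ℤ {b} := by
  have := hp.isTorsionFree
  by_cases hbot : pureClosure (Submodule.span ℤ {a}) = ⊥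
  · exact ⟨0, by rw [hbot, Submodule.span_zero_singleton]⟩
  obtain ⟨b, hb, hb0, b_lt⟩ := hp.exists_forall_lt_two_mul hbot
  refine ⟨b, le_antisymm (fun x hx ↦ ?_) ((Submodule.span_singleton_le_iff_mem ..).mpr hb)⟩
  obtain ⟨n, m, hn, hxb⟩ := exists_smul_eq_smul_of_mem_pureClosure_span_singleton hx hb hb0
  obtain ⟨k, hk⟩ := exists_seminorm_sub_zsmul_le_half p hn hxb
  refine Submodule.mem_span_singleton.mpr ⟨k, ?_⟩
  by_contra hne
  have := b_lt (x - k • b) (sub_mem hx (Submodule.smul_mem _ k hb)) (sub_ne_zero.mpr (Ne.symm hne))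
  linarith

lemma free_pureClosure_span_singleton (hp : IsDiscreteNorm p) (a : A) :
    Free ℤ (pureClosure (Submodule.span ℤ {a})) := by
  have := hp.isTorsionFree
  obtain ⟨b, hb⟩ := hp.exists_pureClosure_span_singleton_eq a
  rw [hb]
  infer_instance

lemma exists_mapsTo_imp_hasDiscreteQuotient (hp : IsDiscreteNorm p) :
    ∃ f : ℤ → A → A, (∀ n, f n 0 = 0) ∧
      ∀ B : Submodule ℤ A, (∀ n, Set.MapsTo (f n) B B) → HasDiscreteQuotient p B := by
  obtain ⟨ε, hε, h⟩ := hp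
  have exists_approx (n : ℤ) (b : A) : ∃ x, (b = 0 → x = 0) ∧
      ∀ a, p (n • a - b) < ‖n‖ * (ε / 2) → p (n • x - b) < ‖n‖ * (ε / 2) := by
    by_cases hb : b = 0
    · exact ⟨0, fun _ ↦ rfl, fun a ha ↦ by simpa [hb] using (apply_nonneg p _).trans_lt ha⟩
    by_cases hx : ∃ x, p (n • x - b) < ‖n‖ * (ε / 2)
    · exact hx.imp fun x hx ↦ ⟨fun h ↦ absurd h hb, fun _ _ ↦ hx⟩
    · exact ⟨0, fun _ ↦ rfl, fun a ha ↦ absurd ⟨a, ha⟩ hx⟩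
  choose f f_zero hf using exists_approx
  refine ⟨f, fun n ↦ f_zero n 0 rfl, fun B hB ↦ hasDiscreteQuotient_iff.mpr
    ⟨ε / 2, half_pos hε, fun n _ a b hb hlt ↦ ?_⟩⟩
  have norm_mul_lt : ‖n‖ * p (a - f n b) < ‖n‖ * ε := by
    calc ‖n‖ * p (a - f n b)
      _ = p ((n • a - b) - (n • f n b - b)) := by
        rw [sub_sub_sub_cancel_right, ← smul_sub, map_smul_eq_mul]
      _ ≤ p (n • a - b) + p (n • f n b - b) := map_sub_le_add p _ _
      _ < ‖n‖ * ε := by linarith [hf n b a hlt]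
  have a_eq : a = f n b := sub_eq_zero.mp (h _ (lt_of_mul_lt_mul_left norm_mul_lt (norm_nonneg n)))
  exact a_eq ▸ hB n hb

end IsDiscreteNorm

lemma HasDiscreteQuotient.exists_le_mem_free_map_mkQ (hB : HasDiscreteQuotient p B) (a : A) :
    ∃ B' : Submodule ℤ A, HasDiscreteQuotient p B' ∧ B ≤ B' ∧ a ∈ B' ∧
      Free ℤ (B'.map B.mkQ) := by
  refine ⟨(pureClosure (Submodule.span ℤ {B.mkQ a})).comap B.mkQ,
    (hB.hasDiscreteQuotient_pureClosure_span_singleton _).comap_mkQ, B.le_comap_mkQ _,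
    le_pureClosure _ (Submodule.mem_span_singleton_self _), ?_⟩
  rw [Submodule.map_comap_eq_of_surjective B.mkQ_surjective]
  exact hB.free_pureClosure_span_singleton _

lemma IsDiscreteNorm.free_of_countable [Countable A] (hp : IsDiscreteNorm p) : Free ℤ A := by
  obtain ⟨g, g_surjective⟩ := exists_surjective_nat A
  choose! extend discrete_extend le_extend mem_extend free_extend using
    fun (B : Submodule ℤ A) (hB : HasDiscreteQuotient p B) ↦ hB.exists_le_mem_free_map_mkQ
  let F (n : ℕ) : Submodule ℤ A := n.rec ⊥ fun k B ↦ extend B (g k)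
  have discrete_F (n : ℕ) : HasDiscreteQuotient p (F n) := by
    induction n with
    | zero => exact hp.hasDiscreteQuotient_bot
    | succ n ih => exact discrete_extend _ ih _
  refine free_of_nat_filtration (monotone_nat_of_le_succ fun n ↦ le_extend _ (discrete_F n) _) rfl
    (fun x ↦ ?_) fun n ↦ free_extend _ (discrete_F n) _
  obtain ⟨n, rfl⟩ := g_surjective x
  exact ⟨n + 1, mem_extend _ (discrete_F n) _⟩

end Seminorm

theorem IsDiscreteNorm.free {A : Type*} [AddCommGroup A] {p : Seminorm ℤ A}
    (hp : IsDiscreteNorm p) : Free ℤ A := by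
  induction hκ : #A using WellFoundedLT.induction generalizing A with
  | ind κ ih =>
    by_cases hA : Countable A
    · exact hp.free_of_countable
    have : Uncountable A := not_countable_iff.mp hA
    obtain ⟨f, f_zero, hf⟩ := hp.exists_mapsTo_imp_hasDiscreteQuotient
    obtain ⟨F, F_mono, F_top, mk_F_lt, mapsTo_F⟩ := exists_filtration_mapsTo (R := ℤ) f
    refine free_of_wellOrdered_filtration F_mono F_top fun i ↦ ?_
    have directed : Directed (· ≤ ·) fun j : Set.Iio i ↦ F j :=
      (F_mono.comp (Subtype.mono_coe _)).directed_le
    have discrete : HasDiscreteQuotient p (⨆ j : Set.Iio i, F j) :=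
      hf _ fun n ↦ mapsTo_iSup_of_directed directed (f_zero n) fun j ↦ mapsTo_F j n
    have mk_map_lt : #((F i).map (⨆ j : Set.Iio i, F j).mkQ) < κ :=
      mk_image_le.trans_lt (hκ ▸ mk_F_lt i)
    exact ih _ mk_map_lt (discrete.comp_subtype _) rfl

/-- Steprāns. An abelian group endowed with a norm
(`‖a‖ = 0 ↔ a = 0`, `‖n • a‖ = |n| ‖a‖` for integers `n`, triangle inequality)
such that the induced metric topology is discrete (every point is isolated)
is a free abelian group. -/
theorem free_of_discrete_normed_abelian_group
    (A : Type*) [AddCommGroup A] (norm : A → ℝ)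
    (hnonneg : ∀ a : A, 0 ≤ norm a)
    (h0 : ∀ a : A, norm a = 0 ↔ a = 0)
    (hsmul : ∀ (n : ℤ) (a : A), norm (n • a) = |(n : ℝ)| * norm a)
    (htri : ∀ a b : A, norm (a + b) ≤ norm a + norm b)
    -- the metric `d a b = norm (a - b)` induces the discrete topology:
    (hdiscrete : ∀ a : A, ∃ ε > (0 : ℝ), ∀ b : A, b ≠ a → ε ≤ norm (b - a)) :
    Module.Free ℤ A := by
  let p : Seminorm ℤ A := .of norm htri fun n a ↦ by rw [hsmul, Int.norm_eq_abs]
  obtain ⟨ε, hε, hzero⟩ := hdiscrete 0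
  have discrete : IsDiscreteNorm p := ⟨ε, hε, fun a hlt ↦ by
    by_contra hne
    exact (hzero a hne).not_gt (by rwa [sub_zero])⟩
  exact discrete.free
end

section
/- Let H be a finite subgroup of a group Γ acting freely on a Cantor set X by homeomorphisms. Then the ℤ[Γ]-module C(X;ℤ) ⊗_ℤ ℤ[Γ/H], with the diagonal left Γ-action, is a free ℤ[Γ]-module. -/
noncomputable section

/-- The `Γ`-action on `C(X; ℤ)` given by `(γ • f) x = f (γ⁻¹ • x)`. -/
def smulC {Γ X : Type*} [Group Γ] [TopologicalSpace X] [MulAction Γ X]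
    (hcont : ∀ γ : Γ, Continuous fun x : X => γ • x) (γ : Γ) (f : C(X, ℤ)) : C(X, ℤ) :=
  f.comp ⟨fun x => γ⁻¹ • x, hcont γ⁻¹⟩

/-- The diagonal `Γ`-action on `C(X;ℤ) ⊗_ℤ ℤ[Γ/H]`, realized as `(Γ ⧸ H) →₀ C(X, ℤ)`
(`ℤ[Γ/H]` is free abelian on the cosets): `γ` acts by left translation on `Γ ⧸ H` and by
`smulC` on the coefficients. -/
def diagAct {Γ X : Type*} [Group Γ] [TopologicalSpace X] [MulAction Γ X] (H : Subgroup Γ)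
    (hcont : ∀ γ : Γ, Continuous fun x : X => γ • x) (γ : Γ)
    (F : (Γ ⧸ H) →₀ C(X, ℤ)) : (Γ ⧸ H) →₀ C(X, ℤ) :=
  Finsupp.equivMapDomain (MulAction.toPerm γ)
    (F.mapRange (smulC hcont γ) (by ext x; rfl))

/-- The left translation `Γ`-action on the free `ℤ[Γ]`-module `⊕_ι ℤ[Γ] = ((ι × Γ) →₀ ℤ)`. -/
def transAct {Γ : Type*} [Group Γ] (ι : Type) (γ : Γ)
    (G : (ι × Γ) →₀ ℤ) : (ι × Γ) →₀ ℤ :=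
  Finsupp.equivMapDomain (Equiv.prodCongr (Equiv.refl ι) (Equiv.mulLeft γ)) G

/-!
A free action of a finite group `H` on a Stone space has a clopen fundamental domain `D`: take a
continuous `f : X → ℕ` that is injective on every orbit, and let `D` consist of the points where
`f` attains its minimum over the orbit. Then `(γ, d) ↦ (γH, γ • d)` is a bijection
`Γ × D ≃ Γ ⧸ H × X`, and pulling functions back along it turns the diagonal action into
translation on `Γ`: `C(X; ℤ) ⊗ ℤ[Γ ⧸ H]` is the `ℤ[Γ]`-module induced from the abelian group
`C(D; ℤ)`, which is free by Nöbeling's theorem.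
-/

open Function Set Topology Module

universe w

section FundamentalDomain

/-- A clopen fundamental domain for an action of `G` on `X`: a clopen set that meets every orbit
in exactly one point, reached by exactly one element of `G`; thus the action is free as soon as
such a set exists. -/
structure IsClopenFundamentalDomain (G : Type*) {X : Type*} [TopologicalSpace X] [SMul G X]
    (D : Set X) : Prop where
  isClopen : IsClopen D
  existsUnique_smul_mem : ∀ x : X, ∃! g : G, g • x ∈ D

variable {G X : Type*} [Group G] [Finite G] [TopologicalSpace X] [MulAction G X]
  [ContinuousConstSMul G X]

theorem exists_isClopen_mem_forall_smul_mem_imp_eq_one [CompactSpace X] [T2Space X]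
    [TotallyDisconnectedSpace X] (hfree : ∀ (g : G) (x : X), g • x = x → g = 1) (x : X) :
    ∃ W : Set X, IsClopen W ∧ x ∈ W ∧ ∀ y ∈ W, ∀ g : G, g • y ∈ W → g = 1 := by
  have hclosed : IsClosed ((fun g : G => g • x) '' {1}ᶜ) := (toFinite _).isClosed
  have hx : x ∉ (fun g : G => g • x) '' {1}ᶜ := fun ⟨g, hg, hgx⟩ => hg (hfree g x hgx)
  obtain ⟨V, hV, hxV, hVsub⟩ := compact_exists_isClopen_in_isOpen hclosed.isOpen_compl hx
  have hclopen : IsClopen (⋂ g ∈ ({1}ᶜ : Set G), (fun y => g • y) ⁻¹' Vᶜ) :=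
    (toFinite _).isClopen_biInter fun g _ => hV.compl.preimage (continuous_const_smul g)
  refine ⟨_, hV.inter hclopen, ⟨hxV, mem_iInter₂.2 fun g hg hgV => hVsub hgV ⟨g, hg, rfl⟩⟩, ?_⟩
  intro y hy g hgy
  by_contra hg
  exact mem_iInter₂.1 hy.2 g hg hgy.1

theorem exists_continuousMap_nat_injective_on_orbits [CompactSpace X] [T2Space X]
    [TotallyDisconnectedSpace X] (hfree : ∀ (g : G) (x : X), g • x = x → g = 1) :
    ∃ f : C(X, ℕ), ∀ x : X, Injective fun g : G => f (g • x) := by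
  choose W hW hxW hWfree using exists_isClopen_mem_forall_smul_mem_imp_eq_one hfree
  obtain ⟨t, ht⟩ := CompactSpace.elim_nhds_subcover W fun x => (hW x).isOpen.mem_nhds (hxW x)
  obtain ⟨code, hcode⟩ := exists_injective_nat (t → Bool)
  -- `f y` records which of the finitely many sets `W i`, `i ∈ t`, contain `y`.
  let f : C(X, ℕ) := ⟨fun y => code fun i => (W i).boolIndicator y,
    (continuous_of_discreteTopology (f := code)).comp <| continuous_pi fun i =>
      (continuous_boolIndicator_iff_isClopen _).2 (hW i)⟩
  have hmem_iff : ∀ y z, f y = f z → ∀ i ∈ t, y ∈ W i ↔ z ∈ W i := fun y z hyz i hi => by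
    rw [mem_iff_boolIndicator, mem_iff_boolIndicator, congrFun (hcode hyz) ⟨i, hi⟩]
  have hfixed : ∀ (g : G) (y : X), f (g • y) = f y → g = 1 := by
    intro g y hgy
    obtain ⟨i, hi, hyW⟩ : ∃ i ∈ t, y ∈ W i := by
      simpa only [mem_iUnion, exists_prop] using ht.ge (mem_univ y)
    exact hWfree i y hyW g ((hmem_iff _ _ hgy i hi).2 hyW)
  refine ⟨f, fun x g k hgk => mul_inv_eq_one.1 (hfixed (g * k⁻¹) (k • x) ?_)⟩
  rwa [smul_smul, inv_mul_cancel_right]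

theorem isClopenFundamentalDomain_setOf_forall_le_smul {f : C(X, ℕ)}
    (hf : ∀ x : X, Injective fun g : G => f (g • x)) :
    IsClopenFundamentalDomain G {x : X | ∀ g : G, f x ≤ f (g • x)} where
  isClopen := by
    rw [ofPred_forall]
    exact isClopen_iInter_of_finite fun g => (isClopen_discrete {p : ℕ × ℕ | p.1 ≤ p.2}).preimage
      (f.continuous.prodMk (f.continuous.comp (continuous_const_smul g)))
  existsUnique_smul_mem x := by
    obtain ⟨g, hg⟩ := Finite.exists_min fun g : G => f (g • x)
    refine ⟨g, fun k => ?_, fun k hk => hf x (le_antisymm ?_ (hg k))⟩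
    · simpa only [smul_smul] using hg (k * g)
    · simpa only [smul_smul, inv_mul_cancel_right] using hk (g * k⁻¹)

theorem exists_isClopenFundamentalDomain [CompactSpace X] [T2Space X]
    [TotallyDisconnectedSpace X] (hfree : ∀ (g : G) (x : X), g • x = x → g = 1) :
    ∃ D : Set X, IsClopenFundamentalDomain G D :=
  let ⟨_, hf⟩ := exists_continuousMap_nat_injective_on_orbits hfree
  ⟨_, isClopenFundamentalDomain_setOf_forall_le_smul hf⟩

theorem IsClopenFundamentalDomain.existsUnique_mk_eq_and_inv_smul_mem {Γ Y : Type*} [Group Γ]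
    [TopologicalSpace Y] [MulAction Γ Y] {H : Subgroup Γ} {D : Set Y}
    (hD : IsClopenFundamentalDomain H D) (c : Γ ⧸ H) (y : Y) :
    ∃! γ : Γ, (γ : Γ ⧸ H) = c ∧ γ⁻¹ • y ∈ D := by
  obtain ⟨δ, rfl⟩ := QuotientGroup.mk_surjective c
  obtain ⟨h, hmem, hunique⟩ := hD.existsUnique_smul_mem (δ⁻¹ • y)
  refine ⟨δ * (h : Γ)⁻¹, ⟨QuotientGroup.mk_mul_of_mem δ (H.inv_mem h.2), ?_⟩, ?_⟩
  · simpa only [mul_inv_rev, inv_inv, mul_smul, Subgroup.smul_def] using hmem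
  · rintro γ ⟨hγ, hγy⟩
    have hk : (⟨γ⁻¹ * δ, QuotientGroup.eq.1 hγ⟩ : H) = h :=
      hunique _ (by simpa only [Subgroup.mk_smul, mul_smul, smul_inv_smul] using hγy)
    simp [← hk]

end FundamentalDomain

section FunctionSpaces

variable {X : Type*} [TopologicalSpace X]

theorem exists_continuousMap_extension_by_zero {A : Type*} [TopologicalSpace A] [Zero A]
    {D : Set X} (hD : IsClopen D) (g : C(D, A)) :
    ∃ f : C(X, A), (∀ d : D, f d = g d) ∧ ∀ x ∉ D, f x = 0 := by
  let f : X → A := extend Subtype.val g 0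
  have hin : ∀ d : D, f d = g d := Subtype.val_injective.extend_apply g _
  have hout : ∀ x ∉ D, f x = 0 := fun x hx =>
    extend_apply' g _ x fun ⟨d, hd⟩ => hx (hd ▸ d.2)
  have hcontD : ContinuousOn f D := by
    rw [continuousOn_iff_continuous_domRestrict]
    exact g.continuous.congr fun d => (hin d).symm
  have hcontDc : ContinuousOn f Dᶜ := continuousOn_const.congr hout
  refine ⟨⟨f, ?_⟩, hin, hout⟩
  rw [← continuousOn_univ, ← union_compl_self D]
  exact hcontD.union_of_isOpen hcontDc hD.isOpen hD.compl.isOpen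

theorem discreteTopology_continuousMap {Y : Type*} [TopologicalSpace Y] [CompactSpace X]
    [DiscreteTopology Y] : DiscreteTopology C(X, Y) := by
  refine discreteTopology_iff_isOpen_singleton.2 fun f => ?_
  have hsingleton : {f} = ⋂ y ∈ range f, {g : C(X, Y) | MapsTo g (f ⁻¹' {y}) {y}} := by
    ext g
    simp only [mem_singleton_iff, ContinuousMap.ext_iff, mem_iInter, forall_mem_range]
    exact ⟨fun h x y hy => (h y).trans hy, fun h x => h x rfl⟩
  rw [hsingleton]
  exact (isCompact_range f.continuous).finite_of_discrete.isOpen_biInter fun y _ =>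
    ContinuousMap.isOpen_setOfPred_mapsTo ((isClosed_discrete {y}).preimage f.continuous).isCompact
      (isOpen_discrete {y})

theorem countable_continuousMap {Y : Type*} [TopologicalSpace Y] [CompactSpace X]
    [TopologicalSpace.MetrizableSpace X] [DiscreteTopology Y] [Countable Y] :
    Countable C(X, Y) := by
  let := TopologicalSpace.metrizableSpaceMetric X
  have := discreteTopology_continuousMap (X := X) (Y := Y)
  exact TopologicalSpace.separableSpace_iff_countable.1 inferInstance

theorem free_int_continuousMap [CompactSpace X] [T2Space X] [TotallyDisconnectedSpace X] :
    Module.Free ℤ C(X, ℤ) := by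
  have : Module.Free ℤ (LocallyConstant X ℤ) := LocallyConstant.freeOfProfinite (Profinite.of X)
  refine Module.Free.of_equiv (LinearEquiv.ofBijective
    (LocallyConstant.toContinuousMapLinearMap ℤ : LocallyConstant X ℤ →ₗ[ℤ] C(X, ℤ))
    ⟨LocallyConstant.toContinuousMap_injective, fun f => ?_⟩)
  exact ⟨⟨f, (IsLocallyConstant.iff_continuous f).2 f.continuous⟩, rfl⟩

theorem exists_basis_of_small (R M : Type*) [Semiring R] [Nontrivial R] [AddCommMonoid M]
    [Module R M] [Module.Free R M] [Small.{w} M] : ∃ ι : Type w, Nonempty (Basis ι R M) := by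
  let b := Module.Free.chooseBasis R M
  have : Small.{w} (Module.Free.ChooseBasisIndex R M) := small_of_injective b.injective
  exact ⟨Shrink.{w} _, ⟨b.reindex (equivShrink _)⟩⟩

theorem exists_basis_continuousMap_clopen [CompactSpace X] [T2Space X]
    [TotallyDisconnectedSpace X] [Small.{w} C(X, ℤ)] {D : Set X} (hD : IsClopen D) :
    ∃ ι : Type w, Nonempty (Basis ι ℤ C(D, ℤ)) := by
  have : CompactSpace D := isCompact_iff_compactSpace.1 hD.isClosed.isCompact
  have := free_int_continuousMap (X := D)
  have : Small.{w} C(D, ℤ) :=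
    small_of_surjective (f := ContinuousMap.restrict D) fun g =>
      let ⟨f, hf, _⟩ := exists_continuousMap_extension_by_zero hD g
      ⟨f, ContinuousMap.ext hf⟩
  exact exists_basis_of_small ℤ C(D, ℤ)

end FunctionSpaces

section Untwisting

variable {Γ X A : Type*} [Group Γ] [TopologicalSpace X] [MulAction Γ X]
  [TopologicalSpace A] [AddCommMonoid A] [ContinuousAdd A]

theorem finite_preimage_quotientGroup_mk (H : Subgroup Γ) [Finite H] {s : Set (Γ ⧸ H)}
    (hs : s.Finite) : ((QuotientGroup.mk : Γ → Γ ⧸ H) ⁻¹' s).Finite :=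
  have := hs.to_subtype
  Finite.of_equiv _ (QuotientGroup.preimageMkEquivSubgroupProdSet H s).symm

/-- Pullback of functions along `Γ × D → Γ ⧸ H × X`, `(γ, d) ↦ (γH, γ • d)`, where a finitely
supported family of functions on `X` indexed by `Γ ⧸ H` is regarded as a function on `Γ ⧸ H × X`.
It trades the diagonal action for translation on `Γ`. -/
def untwist (H : Subgroup Γ) [Finite H] (hcont : ∀ γ : Γ, Continuous fun x : X => γ • x)
    (D : Set X) : ((Γ ⧸ H) →₀ C(X, A)) →+ (Γ →₀ C(D, A)) where
  toFun F := Finsupp.ofSupportFinite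
    (fun γ => (F γ).comp ⟨fun d : D => γ • (d : X), (hcont γ).comp continuous_subtype_val⟩)
    ((finite_preimage_quotientGroup_mk H F.hasFiniteSupport).subset fun γ hγ hFγ =>
      hγ (congrArg (ContinuousMap.comp · _) hFγ))
  map_zero' := by ext; rfl
  map_add' _ _ := by ext; rfl

variable {H : Subgroup Γ} [Finite H] {hcont : ∀ γ : Γ, Continuous fun x : X => γ • x} {D : Set X}

theorem untwist_apply (F : (Γ ⧸ H) →₀ C(X, A)) (γ : Γ) (d : D) :
    untwist H hcont D F γ d = F γ (γ • (d : X)) :=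
  rfl

theorem untwist_injective (hD : IsClopenFundamentalDomain H D) :
    Injective (untwist H hcont D : ((Γ ⧸ H) →₀ C(X, A)) → (Γ →₀ C(D, A))) := by
  intro F F' hFF'
  ext c x
  obtain ⟨γ, ⟨rfl, hγx⟩, -⟩ := hD.existsUnique_mk_eq_and_inv_smul_mem c x
  have h := DFunLike.congr_fun (DFunLike.congr_fun hFF' γ) ⟨γ⁻¹ • x, hγx⟩
  simpa only [untwist_apply, smul_inv_smul] using h

theorem exists_untwist_eq_single (hD : IsClopenFundamentalDomain H D) (γ : Γ) (g : C(D, A)) :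
    ∃ F : (Γ ⧸ H) →₀ C(X, A), untwist H hcont D F = Finsupp.single γ g := by
  obtain ⟨f, hfD, hfDc⟩ := exists_continuousMap_extension_by_zero hD.isClopen g
  refine ⟨Finsupp.single (γ : Γ ⧸ H) (f.comp ⟨fun x => γ⁻¹ • x, hcont γ⁻¹⟩), ?_⟩
  ext δ d
  rw [untwist_apply]
  rcases eq_or_ne γ δ with rfl | hne
  · simp [hfD]
  rw [Finsupp.single_eq_of_ne' hne]
  by_cases hcoset : (γ : Γ ⧸ H) = δ
  · have hδd : γ⁻¹ • δ • (d : X) ∉ D := fun hmem =>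
      hne ((hD.existsUnique_mk_eq_and_inv_smul_mem δ (δ • (d : X))).unique ⟨hcoset, hmem⟩
        ⟨rfl, by simp⟩)
    rw [hcoset, Finsupp.single_eq_same]
    exact hfDc _ hδd
  · rw [Finsupp.single_eq_of_ne' hcoset]
    rfl

theorem untwist_surjective (hD : IsClopenFundamentalDomain H D) :
    Surjective (untwist H hcont D : ((Γ ⧸ H) →₀ C(X, A)) → (Γ →₀ C(D, A))) := by
  intro G
  induction G using Finsupp.induction_linear with
  | zero => exact ⟨0, map_zero _⟩
  | add G G' hG hG' =>
    obtain ⟨F, rfl⟩ := hG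
    obtain ⟨F', rfl⟩ := hG'
    exact ⟨F + F', map_add _ _ _⟩
  | single γ g => exact exists_untwist_eq_single hD γ g

theorem untwist_diagAct_apply (γ δ : Γ) (F : (Γ ⧸ H) →₀ C(X, ℤ)) :
    untwist H hcont D (diagAct H hcont γ F) δ = untwist H hcont D F (γ⁻¹ * δ) := by
  ext d
  rw [untwist_apply, untwist_apply, mul_smul]
  rfl

end Untwisting

/-- The basis can be indexed by a type in the universe of `X`, or in `Type` when `C(X, ℤ)` is
countable; `Small.{w} C(X, ℤ)` treats both cases at once. -/
theorem tensor_with_coset_module_free_general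
    {Γ : Type*} [Group Γ] (H : Subgroup Γ) [Finite H]
    {X : Type*} [TopologicalSpace X] [CompactSpace X] [T2Space X] [TotallyDisconnectedSpace X]
    [Small.{w} C(X, ℤ)] [MulAction Γ X]
    (hcont : ∀ γ : Γ, Continuous fun x : X => γ • x)
    (hfree : ∀ (h : H) (x : X), h • x = x → h = 1) :
    ∃ (ι : Type w) (e : ((Γ ⧸ H) →₀ C(X, ℤ)) ≃+ ((ι × Γ) →₀ ℤ)),
      ∀ (γ : Γ) (F : (Γ ⧸ H) →₀ C(X, ℤ)),
        e (diagAct H hcont γ F) =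
          Finsupp.equivMapDomain (Equiv.prodCongr (Equiv.refl ι) (Equiv.mulLeft γ)) (e F) := by
  have : ContinuousConstSMul H X := ⟨fun h => hcont h⟩
  obtain ⟨D, hD⟩ := exists_isClopenFundamentalDomain hfree
  obtain ⟨ι, ⟨b⟩⟩ := exists_basis_continuousMap_clopen hD.isClopen
  let e : ((Γ ⧸ H) →₀ C(X, ℤ)) ≃+ ((ι × Γ) →₀ ℤ) :=
    (AddEquiv.ofBijective (untwist (A := ℤ) H hcont D)
      ⟨untwist_injective hD, untwist_surjective hD⟩).trans <|
      (Finsupp.mapRange.addEquiv b.repr.toAddEquiv).trans <|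
        Finsupp.curryAddEquiv.symm.trans <| Finsupp.domCongr (Equiv.prodComm Γ ι)
  have he : ∀ F i δ, e F (i, δ) = b.repr (untwist H hcont D F δ) i := fun _ _ _ => rfl
  refine ⟨ι, e, fun γ F => Finsupp.ext fun ⟨i, δ⟩ => ?_⟩
  calc e (diagAct H hcont γ F) (i, δ)
      = b.repr (untwist H hcont D F (γ⁻¹ * δ)) i := by rw [he, untwist_diagAct_apply]
    _ = e F (i, γ⁻¹ * δ) := (he F i _).symm

/-- Let `H` be a finite subgroup of a group `Γ` acting freely by
homeomorphisms on a Cantor set `X`. Then the `ℤ[Γ]`-module `C(X;ℤ) ⊗_ℤ ℤ[Γ/H]` with the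
diagonal left `Γ`-action is a free `ℤ[Γ]`-module: there is an additive isomorphism onto a
direct sum `⊕_ι ℤ[Γ]` intertwining the diagonal action with the translation action. -/
theorem tensor_with_coset_module_free
    (Γ : Type*) [Group Γ] (H : Subgroup Γ) [Finite H]
    (X : Type*) [TopologicalSpace X] [Nonempty X] [CompactSpace X]
    [TopologicalSpace.MetrizableSpace X] [TotallyDisconnectedSpace X] [PerfectSpace X]
    [MulAction Γ X]
    (hcont : ∀ γ : Γ, Continuous fun x : X => γ • x)
    (hfree : ∀ (γ : Γ) (x : X), γ • x = x → γ = 1) :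
    ∃ (ι : Type) (e : ((Γ ⧸ H) →₀ C(X, ℤ)) ≃+ ((ι × Γ) →₀ ℤ)),
      ∀ (γ : Γ) (F : (Γ ⧸ H) →₀ C(X, ℤ)),
        e (diagAct H hcont γ F) = transAct ι γ (e F) := by
  have := countable_continuousMap (X := X) (Y := ℤ)
  exact tensor_with_coset_module_free_general.{0} H hcont fun h x hx => Subtype.ext (hfree h x hx)
end
end
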